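/- arXiv:1903.08834 — 3 statements merged into one kernel-verified Lean document; each statement's English description precedes it below -/
import Mathlib

section
/- Let R be a Noetherian unique factorization domain, let ℓ ≥ 1, let X be a finitely generated R-module of rank ℓ, let F be a free R-module of rank ℓ, and let λ : X → F be an R-linear map whose kernel equals the torsion submodule T₁(X) and whose cokernel E = F/λ(X) is torsion. Let I be a rank-ℓ submodule of X such that λ restricted to I is injective, λ(I) is contained in a free rank-ℓ submodule J of F, and B = J/λ(I) is pseudo-null. Then for every prime ideal P of R of height one, the localizations (F/J)_P, (X/I)_P, T₁(X)_P, and E_P all have finite length over R_P, and length_{R_P}((F/J)_P) + length_{R_P}(T₁(X)_P) = length_{R_P}((X/I)_P) + length_{R_P}(E_P); moreover, length_{R_P}(T₁(X)_P) ≤ length_{R_P}((X/I)_P) for every such P (so that the characteristic ideal of T₁(X) divides that of X/I). -/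
noncomputable def fracRank (R : Type*) [CommRing R] [IsDomain R] (M : Type*) [AddCommGroup M]
    [Module R M] : Cardinal :=
  Module.rank (FractionRing R) (TensorProduct R (FractionRing R) M)

def IsPseudoNull (R : Type*) [CommRing R] (M : Type*) [AddCommGroup M] [Module R M] : Prop :=
  ∀ (P : Ideal R) [hP : P.IsPrime],
    Order.height (⟨P, hP⟩ : PrimeSpectrum R) ≤ 1 →
      Subsingleton (LocalizedModule P.primeCompl M)

/-- The length of the localization of `M` at the prime `P`, defined as the supremum of lengths
of chains of submodules of the localized module. -/
noncomputable def locLength (R : Type*) [CommRing R] (M : Type*) [AddCommGroup M] [Module R M]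
    (P : Ideal R) [P.IsPrime] : ℕ∞ :=
  Order.height (⊤ : Submodule (Localization.AtPrime P) (LocalizedModule P.primeCompl M))

def locFiniteLength (R : Type*) [CommRing R] (M : Type*) [AddCommGroup M] [Module R M]
    (P : Ideal R) [P.IsPrime] : Prop :=
  IsFiniteLength (Localization.AtPrime P) (LocalizedModule P.primeCompl M)

theorem locLength_eq_length (R : Type*) [CommRing R] (M : Type*) [AddCommGroup M] [Module R M]
    (P : Ideal R) [P.IsPrime] :
    locLength R M P = Module.length (Localization.AtPrime P) (LocalizedModule P.primeCompl M) :=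
  (Module.length_eq_height _ _).symm

theorem locFiniteLength_iff (R : Type*) [CommRing R] (M : Type*) [AddCommGroup M] [Module R M]
    (P : Ideal R) [P.IsPrime] :
    locFiniteLength R M P ↔ locLength R M P ≠ ⊤ := by
  rw [locLength_eq_length, Module.length_ne_top_iff]; rfl

theorem locLength_add {R : Type*} [CommRing R] {M N K : Type*} [AddCommGroup M] [Module R M]
    [AddCommGroup N] [Module R N] [AddCommGroup K] [Module R K]
    (f : M →ₗ[R] N) (g : N →ₗ[R] K) (hf : Function.Injective f) (hg : Function.Surjective g)
    (h : Function.Exact f g) (P : Ideal R) [P.IsPrime] :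
    locLength R N P = locLength R M P + locLength R K P := by
  simp only [locLength_eq_length]
  exact Module.length_eq_add_of_exact
    (IsLocalizedModule.mapExtendScalars P.primeCompl (LocalizedModule.mkLinearMap P.primeCompl M)
      (LocalizedModule.mkLinearMap P.primeCompl N) (Localization.AtPrime P) f)
    (IsLocalizedModule.mapExtendScalars P.primeCompl (LocalizedModule.mkLinearMap P.primeCompl N)
      (LocalizedModule.mkLinearMap P.primeCompl K) (Localization.AtPrime P) g)
    (IsLocalizedModule.map_injective P.primeCompl _ _ f hf)
    (IsLocalizedModule.map_surjective P.primeCompl _ _ g hg)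
    (IsLocalizedModule.map_exact P.primeCompl _ _ _ f g h)

theorem locLength_quot {R : Type*} [CommRing R] {M : Type*} [AddCommGroup M] [Module R M]
    (A B : Submodule R M) (h : A ≤ B) (P : Ideal R) [P.IsPrime] :
    locLength R (M ⧸ A) P = locLength R (B ⧸ A.comap B.subtype) P + locLength R (M ⧸ B) P := by
  refine locLength_add (Submodule.mapQ (A.comap B.subtype) A B.subtype le_rfl)
    (Submodule.factor h) ?_ (Submodule.factor_surjective h) ?_ P
  · rw [← LinearMap.ker_eq_bot, Submodule.ker_mapQ]
    exact Submodule.mkQ_map_self _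
  · intro x
    obtain ⟨x, rfl⟩ := Submodule.Quotient.mk_surjective _ x
    constructor
    · intro hx
      have : x ∈ B := by simpa using hx
      exact ⟨Submodule.Quotient.mk ⟨x, this⟩, rfl⟩
    · rintro ⟨y, hy⟩
      obtain ⟨y, rfl⟩ := Submodule.Quotient.mk_surjective _ y
      rw [← hy]
      simp

theorem locFinite_of_torsion {R : Type*} [CommRing R] [IsDomain R] [IsNoetherianRing R]
    {M : Type*} [AddCommGroup M] [Module R M] [Module.Finite R M] (hM : Module.IsTorsion R M)
    (P : Ideal R) [hP : P.IsPrime] (h : Order.height (⟨P, hP⟩ : PrimeSpectrum R) = 1) :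
    locFiniteLength R M P := by
  obtain ⟨a, ha, ha0⟩ := Submodule.annihilator_top_inter_nonZeroDivisors hM
  let A := Localization.AtPrime P
  have hdim : ringKrullDim A = 1 := by
    rw [IsLocalization.AtPrime.ringKrullDim_eq_height P A, show P.height = 1 from (PrimeSpectrum.height_eq_orderHeight ⟨P, hP⟩).trans h]
    rfl
  have : Ring.KrullDimLE 1 A := by
    rw [Ring.KrullDimLE, Order.krullDimLE_iff]
    exact hdim.le
  let N := LocalizedModule P.primeCompl M
  let b : A := algebraMap R A a
  have hb : b ∈ nonZeroDivisors A := by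
    rw [mem_nonZeroDivisors_iff_ne_zero]
    intro hb
    exact nonZeroDivisors.ne_zero ha0 ((IsLocalization.injective A P.primeCompl_le_nonZeroDivisors)
      (hb.trans (map_zero _).symm))
  have hfl := isFiniteLength_quotient_span_singleton A hb
  have hbN : ∀ x : N, b • x = 0 := by
    intro x
    induction x using LocalizedModule.induction_on with
    | h m s =>
      have : a • m = 0 := Submodule.mem_annihilator.mp ha m trivial
      rw [algebraMap_smul, LocalizedModule.smul'_mk, this, LocalizedModule.zero_mk]
  haveI : Module.Finite A N := inferInstance
  obtain ⟨n, f, hf⟩ := Module.Finite.exists_fin' A N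
  have hfl' : IsFiniteLength A (Fin n → A ⧸ Ideal.span {b}) := by
    rw [isFiniteLength_iff_isNoetherian_isArtinian] at hfl ⊢
    obtain ⟨_, _⟩ := hfl
    exact ⟨inferInstance, inferInstance⟩
  let g : Fin n → (A ⧸ Ideal.span {b}) →ₗ[A] N := fun i =>
    Submodule.liftQ _ (LinearMap.toSpanSingleton A N (f (Pi.single i 1))) (by
      rw [Ideal.span, Submodule.span_le]
      rintro _ rfl
      simpa using hbN _)
  refine IsFiniteLength.of_surjective (f := LinearMap.lsum A _ A g) hfl' ?_
  intro y
  obtain ⟨v, rfl⟩ := hf y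
  refine ⟨fun i => Submodule.Quotient.mk (v i), ?_⟩
  rw [LinearMap.lsum_apply]
  rw [LinearMap.pi_apply_eq_sum_univ f v]
  rw [LinearMap.sum_apply]
  refine Finset.sum_congr rfl fun i _ => ?_
  have hs : (Pi.single i 1 : Fin n → A) = fun j => if i = j then 1 else 0 := by
    ext j
    simp [Pi.single_apply, eq_comm]
  rw [← hs]
  rfl

theorem statement2 (R : Type*) [CommRing R] [IsDomain R] [IsNoetherianRing R]
    [UniqueFactorizationMonoid R]
    (ℓ : ℕ) (hℓ : 1 ≤ ℓ)
    (X : Type*) [AddCommGroup X] [Module R X] [Module.Finite R X]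
    (F : Type*) [AddCommGroup F] [Module R F] [Module.Free R F]
    (hX : fracRank R X = ℓ) (hF : Module.rank R F = ℓ)
    (lam : X →ₗ[R] F)
    (hker : LinearMap.ker lam = Submodule.torsion R X)
    (hcoker : Module.IsTorsion R (F ⧸ LinearMap.range lam))
    (I : Submodule R X) (hIrank : fracRank R I = ℓ)
    (hinj : Function.Injective (lam.domRestrict I))
    (J : Submodule R F) [Module.Free R J] (hJrank : Module.rank R J = ℓ)
    (hIJ : Submodule.map lam I ≤ J)
    (hB : IsPseudoNull R (J ⧸ (Submodule.map lam I).comap J.subtype)) :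
    ∀ (P : Ideal R) [hP : P.IsPrime], Order.height (⟨P, hP⟩ : PrimeSpectrum R) = 1 →
      locFiniteLength R (F ⧸ J) P ∧
      locFiniteLength R (X ⧸ I) P ∧
      locFiniteLength R (Submodule.torsion R X) P ∧
      locFiniteLength R (F ⧸ LinearMap.range lam) P ∧
      locLength R (F ⧸ J) P + locLength R (Submodule.torsion R X) P =
        locLength R (X ⧸ I) P + locLength R (F ⧸ LinearMap.range lam) P ∧
      locLength R (Submodule.torsion R X) P ≤ locLength R (X ⧸ I) P := by
  intro P hP h
  have hFfin : Module.Finite R F :=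
    Module.finite_of_rank_eq_nat hF
  have hFJ : Module.IsTorsion R (F ⧸ J) := by
    rw [← Module.rank_eq_zero_iff_isTorsion]
    have := rank_quotient_add_rank_of_isDomain J
    rw [hF, hJrank] at this
    exact Cardinal.eq_of_add_eq_add_right (this.trans (zero_add _).symm) (Cardinal.natCast_lt_aleph0)
  have f1 := locFinite_of_torsion hFJ P h
  have f3 : locFiniteLength R (Submodule.torsion R X) P :=
    locFinite_of_torsion (Submodule.torsion_isTorsion) P h
  have f4 := locFinite_of_torsion hcoker P h
  have hB0 : locLength R (J ⧸ (Submodule.map lam I).comap J.subtype) P = 0 := by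
    rw [locLength_eq_length, Module.length_eq_zero_iff]
    exact hB P h.le
  have e1 := locLength_quot _ _ hIJ P
  rw [hB0, zero_add] at e1
  have e2 := locLength_quot (Submodule.map lam I) (LinearMap.range lam) LinearMap.map_le_range P
  have hinj' : ∀ x ∈ I, lam x = 0 → x = 0 := by
    intro x hx hx0
    have := @hinj ⟨x, hx⟩ 0 (by simpa using hx0)
    simpa using this
  have hle : I ≤ ((Submodule.map lam I).comap (LinearMap.range lam).subtype).comap
      lam.rangeRestrict := fun x hx => ⟨x, hx, rfl⟩
  have e3 : locLength R (X ⧸ I) P = locLength R (Submodule.torsion R X) P +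
      locLength R (LinearMap.range lam ⧸
        (Submodule.map lam I).comap (LinearMap.range lam).subtype) P := by
    refine locLength_add (I.mkQ ∘ₗ (Submodule.torsion R X).subtype)
      (Submodule.mapQ I _ lam.rangeRestrict hle) ?_ ?_ ?_ P
    · rw [injective_iff_map_eq_zero]
      rintro ⟨x, hx⟩ hx0
      have hxI : x ∈ I := by simpa using hx0
      rw [← hker] at hx
      exact Subtype.ext (hinj' x hxI hx)
    · intro y
      obtain ⟨⟨_, x, rfl⟩, rfl⟩ := Submodule.Quotient.mk_surjective _ y
      exact ⟨Submodule.Quotient.mk x, rfl⟩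
    · intro y
      obtain ⟨x, rfl⟩ := Submodule.Quotient.mk_surjective _ y
      constructor
      · intro hx
        rw [Submodule.mapQ_apply, Submodule.Quotient.mk_eq_zero] at hx
        obtain ⟨i, hi, hix⟩ := hx
        have hix : lam i = lam x := hix
        refine ⟨⟨x - i, ?_⟩, ?_⟩
        · rw [← hker, LinearMap.mem_ker, map_sub, hix, sub_self]
        · refine (Submodule.Quotient.eq I).2 ?_
          simpa using hi
      · rintro ⟨⟨t, ht⟩, htx⟩
        rw [← hker] at ht
        rw [← htx]
        change Submodule.Quotient.mk (lam.rangeRestrict t) = _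
        have : lam.rangeRestrict t = 0 := Subtype.ext ht
        rw [this]; rfl
  refine ⟨f1, ?_, f3, f4, ?_, ?_⟩
  · rw [locFiniteLength_iff] at f1 f3 ⊢
    rw [e3]
    rw [← e1, e2] at f1
    exact WithTop.add_ne_top.2 ⟨f3, (WithTop.add_ne_top.1 f1).1⟩
  · rw [← e1, e2, e3]; ac_rfl
  · rw [e3]; exact le_self_add
end

section
/- Let R be a Noetherian unique factorization domain, let n ≥ 1, let g₁, …, gₙ be nonzero elements of R, and let θ be a greatest common divisor of g₁, …, gₙ in R. Then the maximal pseudo-null submodule T₂(R/(g₁,…,gₙ)) of the R-module R/(g₁,…,gₙ) equals the image θ·R/(g₁,…,gₙ) of the principal ideal (θ), and multiplication by θ induces an isomorphism of R-modules R/(g₁/θ,…,gₙ/θ) ≅ θ·R/(g₁,…,gₙ). -/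
/-- The maximal pseudo-null submodule `T₂(M)`: the submodule of elements whose image in the
localization `M_P` is zero for every prime `P` of height at most 1. -/
noncomputable def maxPseudoNullSubmodule (R : Type*) [CommRing R] (M : Type*) [AddCommGroup M]
    [Module R M] : Submodule R M :=
  ⨅ (P : Ideal R) (hP : P.IsPrime) (_ : Order.height (⟨P, hP⟩ : PrimeSpectrum R) ≤ 1),
    LinearMap.ker (LocalizedModule.mkLinearMap (@Ideal.primeCompl _ _ P hP) M)

theorem aux_dvd {R : Type*} [CommRing R] [IsDomain R] [UniqueFactorizationMonoid R] (θ : R) :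
    θ ≠ 0 → ∀ x : R, (∀ p : R, Prime p → ∃ s, ¬ p ∣ s ∧ θ ∣ s * x) → θ ∣ x := by
  induction θ using UniqueFactorizationMonoid.induction_on_prime with
  | h₁ => intro h; exact absurd rfl h
  | h₂ u hu => intro _ x _; exact hu.dvd
  | h₃ a p ha hp ih =>
    intro _ x hx
    obtain ⟨y, rfl⟩ := ih ha x (fun q hq => by
      obtain ⟨s, hs, hd⟩ := hx q hq
      exact ⟨s, hs, (dvd_mul_left a p).trans hd⟩)
    obtain ⟨s, hs, hd⟩ := hx p hp
    have h1 : a * p ∣ a * (s * y) := by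
      convert hd using 1 <;> ring
    have h2 := (mul_dvd_mul_iff_left ha).1 h1
    rw [mul_comm p a]
    exact mul_dvd_mul_left a ((hp.dvd_or_dvd h2).resolve_left hs)

theorem aux_mem {R : Type*} [CommRing R] (I : Ideal R) (x : R) :
    (Submodule.Quotient.mk x : R ⧸ I) ∈ maxPseudoNullSubmodule R (R ⧸ I) ↔
    ∀ (P : Ideal R) (hP : P.IsPrime), Order.height (⟨P, hP⟩ : PrimeSpectrum R) ≤ 1 →
      ∃ s, s ∉ P ∧ s * x ∈ I := by
  unfold maxPseudoNullSubmodule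
  simp only [Submodule.mem_iInf, LinearMap.mem_ker, LocalizedModule.mkLinearMap_apply]
  refine forall_congr' fun P => forall_congr' fun hP => forall_congr' fun _ => ?_
  rw [← LocalizedModule.zero_mk 1, LocalizedModule.mk_eq]
  constructor
  · rintro ⟨u, hu⟩
    refine ⟨u, u.2, ?_⟩
    rw [← Submodule.Quotient.mk_eq_zero I]
    simp only [one_smul, smul_zero] at hu
    exact hu
  · rintro ⟨s, hs, h⟩
    refine ⟨⟨s, hs⟩, ?_⟩
    rw [← Submodule.Quotient.mk_eq_zero I] at h
    simp only [one_smul, smul_zero]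
    exact h

theorem aux_height {R : Type*} [CommRing R] [IsDomain R] [IsNoetherianRing R] (p : R)
    (hP : (Ideal.span {p}).IsPrime) :
    Order.height (⟨Ideal.span {p}, hP⟩ : PrimeSpectrum R) ≤ 1 := by
  have h := Ideal.height_le_one_of_isPrincipal_of_mem_minimalPrimes (Ideal.span {p})
    (Ideal.span {p}) (by rw [Ideal.minimalPrimes_eq_subsingleton_self]; rfl)
  exact (PrimeSpectrum.height_eq_orderHeight ⟨Ideal.span {p}, hP⟩).symm.trans_le h

theorem aux_principal {R : Type*} [CommRing R] [IsDomain R] [UniqueFactorizationMonoid R]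
    (P : Ideal R) (hP : P.IsPrime) (h0 : P ≠ ⊥)
    (hh : Order.height (⟨P, hP⟩ : PrimeSpectrum R) ≤ 1) :
    ∃ p, Prime p ∧ P = Ideal.span {p} := by
  obtain ⟨p, hpP, hp⟩ := hP.exists_mem_prime_of_ne_bot h0
  refine ⟨p, hp, ?_⟩
  have hle : Ideal.span {p} ≤ P := (Ideal.span_singleton_le_iff_mem P).2 hpP
  have hpr : (Ideal.span {p}).IsPrime := (Ideal.span_singleton_prime hp.ne_zero).2 hp
  by_contra hne
  have hlt : (⟨Ideal.span {p}, hpr⟩ : PrimeSpectrum R) < ⟨P, hP⟩ :=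
    lt_of_le_of_ne hle (fun h => hne (congrArg PrimeSpectrum.asIdeal h).symm)
  have hlt0 : (⟨⊥, Ideal.isPrime_bot⟩ : PrimeSpectrum R) < ⟨Ideal.span {p}, hpr⟩ :=
    lt_of_le_of_ne (bot_le (a := Ideal.span {p})) (fun h => hp.ne_zero
      (Ideal.span_singleton_eq_bot.1 (congrArg PrimeSpectrum.asIdeal h).symm))
  have a1 := Order.height_add_one_le hlt
  have a0 := Order.height_add_one_le hlt0
  have h2 : (1 + 1 : ℕ∞) ≤ 1 := by
    refine le_trans ?_ (a1.trans hh)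
    gcongr
    exact le_trans le_add_self a0
  exact absurd h2 (by decide)

theorem statement6 (R : Type*) [CommRing R] [IsDomain R] [IsNoetherianRing R]
    [UniqueFactorizationMonoid R]
    (n : ℕ) (hn : 1 ≤ n) (g g' : Fin n → R) (θ : R)
    (hg : ∀ i, g i ≠ 0)
    (hdvd : ∀ i, g i = θ * g' i)
    (hgcd : ∀ d : R, (∀ i, d ∣ g i) → d ∣ θ) :
    maxPseudoNullSubmodule R (R ⧸ Ideal.span (Set.range g)) =
      Submodule.map (Ideal.span (Set.range g)).mkQ (Ideal.span {θ}) ∧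
    ∃ φ : (R ⧸ Ideal.span (Set.range g')) ≃ₗ[R]
        Submodule.map (Ideal.span (Set.range g)).mkQ (Ideal.span {θ}),
      ∀ x : R, (φ (Submodule.Quotient.mk x) : R ⧸ Ideal.span (Set.range g)) =
        Submodule.Quotient.mk (θ * x) := by
  have hθ : θ ≠ 0 := fun h => hg ⟨0, hn⟩ (by rw [hdvd, h, zero_mul])
  have hI : Ideal.span (Set.range g) = Ideal.span {θ} * Ideal.span (Set.range g') := by
    rw [Ideal.span_mul_span', Set.singleton_mul, ← Set.range_comp]
    congr 2
    ext i
    exact hdvd i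
  have hmem : ∀ x, θ * x ∈ Ideal.span (Set.range g) ↔ x ∈ Ideal.span (Set.range g') := by
    intro x
    rw [hI, Ideal.mem_span_singleton_mul]
    constructor
    · rintro ⟨z, hz, h⟩
      rwa [← mul_left_cancel₀ hθ h]
    · intro h
      exact ⟨x, h, rfl⟩
  have hIθ : Ideal.span (Set.range g) ≤ Ideal.span {θ} := hI ▸ Ideal.mul_le_left
  constructor
  · ext m
    obtain ⟨x, rfl⟩ := Submodule.Quotient.mk_surjective _ m
    rw [aux_mem]
    constructor
    · intro h
      refine ⟨x, ?_, rfl⟩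
      refine Ideal.mem_span_singleton.2 (aux_dvd θ hθ x fun p hp => ?_)
      have hpr : (Ideal.span {p}).IsPrime := (Ideal.span_singleton_prime hp.ne_zero).2 hp
      obtain ⟨s, hs, hx⟩ := h _ hpr (aux_height p hpr)
      exact ⟨s, fun h => hs (Ideal.mem_span_singleton.2 h),
        Ideal.mem_span_singleton.1 (hIθ hx)⟩
    · rintro ⟨y, hy, hyx⟩ P hP hh
      obtain ⟨z, rfl⟩ := Ideal.mem_span_singleton.1 hy
      have hsub : θ * z - x ∈ Ideal.span (Set.range g) := (Submodule.Quotient.eq _).1 hyx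
      have : ∃ i, g' i ∉ P := by
        by_contra! hall
        have h0 : P ≠ ⊥ := by
          rintro rfl
          exact hg ⟨0, hn⟩ (by rw [hdvd, Ideal.mem_bot.1 (hall ⟨0, hn⟩), mul_zero])
        obtain ⟨p, hp, rfl⟩ := aux_principal P hP h0 hh
        have h1 : θ * p ∣ θ * 1 := by
          rw [mul_one]
          refine hgcd _ fun i => ?_
          rw [hdvd]
          exact mul_dvd_mul_left θ (Ideal.mem_span_singleton.1 (hall i))
        exact hp.not_isUnit (isUnit_of_dvd_one ((mul_dvd_mul_iff_left hθ).1 h1))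
      obtain ⟨i, hi⟩ := this
      refine ⟨g' i, hi, ?_⟩
      have e : g' i * x = g i * z - g' i * (θ * z - x) := by rw [hdvd]; ring
      rw [e]
      exact sub_mem (Ideal.mul_mem_right _ _ (Ideal.subset_span ⟨i, rfl⟩))
        (Ideal.mul_mem_left _ _ hsub)
  · let f : R →ₗ[R] Submodule.map (Ideal.span (Set.range g)).mkQ (Ideal.span {θ}) :=
      LinearMap.codRestrict _ ((Ideal.span (Set.range g)).mkQ ∘ₗ LinearMap.mulLeft R θ)
        (fun x => ⟨θ * x, Ideal.mem_span_singleton.2 (dvd_mul_right θ x), rfl⟩)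
    have hker : ∀ x, f x = 0 ↔ x ∈ Ideal.span (Set.range g') := by
      intro x
      rw [← hmem, ← Submodule.Quotient.mk_eq_zero, Subtype.ext_iff]
      rfl
    let F := Submodule.liftQ (Ideal.span (Set.range g')) f (fun x hx => (hker x).2 hx)
    have hF : ∀ x, F (Submodule.Quotient.mk x) = f x := fun x => rfl
    refine ⟨LinearEquiv.ofBijective F ⟨?_, ?_⟩, fun x => rfl⟩
    · rw [injective_iff_map_eq_zero]
      intro a
      obtain ⟨x, rfl⟩ := Submodule.Quotient.mk_surjective _ a
      intro h
      rw [hF, hker] at h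
      exact (Submodule.Quotient.mk_eq_zero _).2 h
    · rintro ⟨_, y, hy, rfl⟩
      obtain ⟨z, rfl⟩ := Ideal.mem_span_singleton.1 hy
      exact ⟨Submodule.Quotient.mk z, rfl⟩
end

section
/- Let R be a commutative Noetherian regular integral domain and let M be a finitely generated pseudo-null R-module. Then for every prime ideal P of R of height 2, the localizations M_P and (Ext²_R(M,R))_P have finite length over R_P and length_{R_P}((Ext²_R(M,R))_P) = length_{R_P}(M_P); that is, the second Chern class of Ext²_R(M,R) equals the second Chern class of M. -/
open CategoryTheory

universe u

/-- `Ext^i_R(M, N)` as an `R`-module, via the derived functor `Ext` bifunctor on the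
category of `R`-modules. -/
noncomputable def ExtMod (R : Type u) [CommRing R] (M N : Type u) [AddCommGroup M] [Module R M]
    [AddCommGroup N] [Module R N] (i : ℕ) : ModuleCat.{u} R :=
  ((Ext R (ModuleCat.{u} R) i).obj (Opposite.op (ModuleCat.of R M))).obj (ModuleCat.of R N)

namespace SecondChern

abbrev EE (R : Type u) [CommRing R] (N : Type u) [AddCommGroup N] [Module R N] (n : ℕ) : Type u :=
  CategoryTheory.Abelian.Ext.{u} (ModuleCat.of R N) (ModuleCat.of R R) n

section
variable {R : Type u} [CommRing R]
variable {N₁ N₂ N₃ : Type u} [AddCommGroup N₁] [Module R N₁] [AddCommGroup N₂] [Module R N₂]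
  [AddCommGroup N₃] [Module R N₃]

/-- contravariant functoriality -/
noncomputable def emap (f : N₁ →ₗ[R] N₂) (n : ℕ) : EE R N₂ n →ₗ[R] EE R N₁ n :=
  (CategoryTheory.Abelian.Ext.mk₀ (ModuleCat.ofHom f)).precompOfLinear R
    (ModuleCat.of R R) (zero_add n)

lemma emap_comp (f : N₁ →ₗ[R] N₂) (g : N₂ →ₗ[R] N₃) (n : ℕ) :
    emap (g ∘ₗ f) n = emap f n ∘ₗ emap g n := by
  ext x
  simp [emap]

lemma emap_smul_id (r : R) (n : ℕ) (x : EE R N₁ n) :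
    emap (r • (LinearMap.id : N₁ →ₗ[R] N₁)) n x = r • x := by
  have : ModuleCat.ofHom (r • (LinearMap.id : N₁ →ₗ[R] N₁)) = r • 𝟙 (ModuleCat.of R N₁) := rfl
  simp [emap, this, CategoryTheory.Abelian.Ext.mk₀_smul]

lemma emap_zero (n : ℕ) : emap (0 : N₁ →ₗ[R] N₂) n = 0 := by
  ext x
  have : ModuleCat.ofHom (0 : N₁ →ₗ[R] N₂) = 0 := rfl
  simp [emap, this]

variable (f : N₁ →ₗ[R] N₂) (g : N₂ →ₗ[R] N₃) (hf : Function.Injective f)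
  (hg : Function.Surjective g) (H : Function.Exact f g)

def sc (H : Function.Exact f g) : ShortComplex (ModuleCat.{u} R) :=
  ShortComplex.mk (ModuleCat.ofHom f) (ModuleCat.ofHom g) (by
    ext x; exact (H _).2 ⟨x, rfl⟩)

include hf hg in
lemma sc_exact : (sc f g H).ShortExact where
  exact := by
    rw [ShortComplex.ShortExact.moduleCat_exact_iff_function_exact]
    exact H
  mono_f := by
    rw [ModuleCat.mono_iff_injective]; exact hf
  epi_g := by
    rw [ModuleCat.epi_iff_surjective]; exact hg

noncomputable def delta (n : ℕ) : EE R N₁ n →ₗ[R] EE R N₃ (n + 1) :=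
  (sc_exact f g hf hg H).extClass.precompOfLinear R (ModuleCat.of R R) (add_comm 1 n)

include hf hg H in
lemma exact₂ (n : ℕ) : Function.Exact (emap g n) (emap f n) := by
  intro x
  constructor
  · intro hx
    exact CategoryTheory.Abelian.Ext.contravariant_sequence_exact₂ (sc_exact f g hf hg H) _ x hx
  · rintro ⟨x, rfl⟩
    rw [← LinearMap.comp_apply, ← emap_comp, H.linearMap_comp_eq_zero, emap_zero]; rfl

lemma exact₁ (n : ℕ) : Function.Exact (emap f n) (delta f g hf hg H n) := by
  intro x
  constructor
  · intro hx
    exact CategoryTheory.Abelian.Ext.contravariant_sequence_exact₁ (sc_exact f g hf hg H) _ x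
      (add_comm 1 n) hx
  · rintro ⟨x, rfl⟩
    exact ShortComplex.ShortExact.extClass_comp_assoc (sc_exact f g hf hg H) x (h := add_comm 1 n)

lemma exact₃ (n : ℕ) : Function.Exact (delta f g hf hg H n) (emap g (n+1)) := by
  intro x
  constructor
  · intro hx
    exact CategoryTheory.Abelian.Ext.contravariant_sequence_exact₃ (sc_exact f g hf hg H) _ x hx
      (add_comm 1 n)
  · rintro ⟨x, rfl⟩
    exact ShortComplex.ShortExact.comp_extClass_assoc (sc_exact f g hf hg H) x (add_comm 1 n)

include hg in
lemma emap_injective_zero : Function.Injective (emap g 0) := by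
  have : Epi (ModuleCat.ofHom g) := by
    rw [ModuleCat.epi_iff_surjective]; exact hg
  exact CategoryTheory.Abelian.Ext.precomp_mk₀_injective_of_epi _ (ModuleCat.ofHom g)

instance (n : ℕ) : Subsingleton (EE R R (n+1)) :=
  CategoryTheory.Abelian.Ext.subsingleton_of_projective _ _ n

noncomputable def eZero : EE R N₁ 0 ≃ₗ[R] (N₁ →ₗ[R] R) :=
  CategoryTheory.Abelian.Ext.linearEquiv₀.trans ModuleCat.homLinearEquiv

lemma smul_eq_zero_of_ann (r : R) (h : ∀ x : N₁, r • x = 0) (n : ℕ) (x : EE R N₁ n) :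
    r • x = 0 := by
  rw [← emap_smul_id, show r • (LinearMap.id : N₁ →ₗ[R] N₁) = 0 from LinearMap.ext h, emap_zero]
  rfl

end

section compare
variable {R : Type u} [CommRing R] (M : Type u) [AddCommGroup M] [Module R M]

noncomputable def extModEquiv : ExtMod R M R 2 ≃ₗ[R] EE R M 2 := by
  let P := ProjectiveResolution.of (ModuleCat.of R M)
  let K := P.complex.linearYonedaObj R (ModuleCat.of R R)
  let S := K.sc' 1 2 3
  let e1 : ExtMod R M R 2 ≅ S.moduleCatLeftHomologyData.H :=
    P.isoExt 2 (ModuleCat.of R R) ≪≫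
    (ShortComplex.homologyMapIso (K.isoSc' 1 2 3 (by simp) (by simp))) ≪≫
      S.moduleCatHomologyIso
  let φ : LinearMap.ker S.g.hom →ₗ[R] EE R M 2 :=
    { toFun f := P.extMk (f.1 : P.complex.X 2 ⟶ ModuleCat.of R R) 3 rfl f.2
      map_add' f g := (P.add_extMk _ _ _ _ _ _).symm
      map_smul' r f := by
        have := P.extMk_comp_mk₀ (f.1 : P.complex.X 2 ⟶ ModuleCat.of R R) 3 rfl f.2
          (r • 𝟙 (ModuleCat.of R R))
        rw [← CategoryTheory.Abelian.Ext.smul_eq_comp_mk₀] at this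
        refine Eq.trans ?_ this.symm
        congr 1 }
  have hs : Function.Surjective φ := by
    intro x
    obtain ⟨f, hf, h⟩ := P.extMk_surjective x 3 rfl
    exact ⟨⟨f, hf⟩, h⟩
  have hk : LinearMap.ker φ = LinearMap.range S.moduleCatToCycles := by
    ext f
    rw [LinearMap.mem_ker]
    refine (P.extMk_eq_zero_iff (f.1 : P.complex.X 2 ⟶ ModuleCat.of R R) 3 rfl f.2 1 rfl).trans ?_
    constructor
    · rintro ⟨g, hg⟩
      exact ⟨g, Subtype.ext hg⟩
    · rintro ⟨g, hg⟩
      exact ⟨g, congrArg Subtype.val hg⟩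
  exact e1.toLinearEquiv ≪≫ₗ (Submodule.quotEquivOfEq _ _ hk.symm ≪≫ₗ
    φ.quotKerEquivOfSurjective hs)
end compare

end SecondChern

namespace SecondChern
open IsLocalRing

section regular

lemma pow_notMem {A : Type*} [CommRing A] [IsLocalRing A] [IsNoetherianRing A] (a b : A)
    (hm : maximalIdeal A = Ideal.span {a, b}) (hd : ringKrullDim A = 2) (n : ℕ) :
    b ^ n ∉ Ideal.span {a} := by
  intro hb
  have ha : a ∈ maximalIdeal A := by rw [hm]; exact Ideal.subset_span (by simp)
  have hmin : maximalIdeal A ∈ (Ideal.span {a}).minimalPrimes := by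
    refine ⟨⟨inferInstance, (Ideal.span_singleton_le_iff_mem _).2 ha⟩, ?_⟩
    rintro q ⟨hq, hqa⟩ -
    rw [hm, Ideal.span_le]
    rintro c (rfl | rfl)
    · exact hqa (Ideal.mem_span_singleton_self _)
    · exact hq.mem_of_pow_mem n (hqa hb)
  have h1 := Ideal.height_le_one_of_isPrincipal_of_mem_minimalPrimes _ _ hmin
  rw [← maximalIdeal_height_eq_ringKrullDim] at hd
  have h2 : (maximalIdeal A).height = 2 := WithBot.coe_injective hd
  rw [h2] at h1
  exact absurd h1 (by decide)

lemma reg_local {A : Type*} [CommRing A] [IsLocalRing A] [IsNoetherianRing A] (a b : A)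
    (hm : maximalIdeal A = Ideal.span {a, b}) (hd : ringKrullDim A = 2) (z : A)
    (hz : b * z ∈ Ideal.span {a}) : z ∈ Ideal.span {a} := by
  have key : ∀ n : ℕ, ∀ k : ℕ, ∀ z : A, b ^ k * z ∈ Ideal.span {a} →
      ∃ u v, z = u * a + b ^ n * v := by
    intro n
    induction n with
    | zero => intro k z _; exact ⟨0, z, by simp⟩
    | succ n ih =>
      intro k z hz
      have hz' : z ∈ maximalIdeal A := by
        rw [mem_maximalIdeal, mem_nonunits_iff]
        intro hu
        exact pow_notMem a b hm hd k ((Ideal.mul_unit_mem_iff_mem _ hu).1 hz)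
      rw [hm, Ideal.mem_span_pair] at hz'
      obtain ⟨c, w, rfl⟩ := hz'
      have : b ^ (k+1) * w ∈ Ideal.span {a} := by
        have h2 := sub_mem hz (Ideal.mul_mem_left (Ideal.span {a}) (b ^ k * c)
          (Ideal.mem_span_singleton_self a))
        convert h2 using 1; ring
      obtain ⟨u, v, rfl⟩ := ih _ _ this
      exact ⟨c + u * b, v, by ring⟩
  have hk := Ideal.iInf_pow_smul_eq_bot_of_isLocalRing (M := A ⧸ Ideal.span {a})
    (maximalIdeal A) (Ideal.IsPrime.ne_top inferInstance)
  rw [← Ideal.Quotient.eq_zero_iff_mem, ← Submodule.mem_bot A, ← hk, Submodule.mem_iInf]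
  intro n
  obtain ⟨u, v, rfl⟩ := key n 1 z (by simpa using hz)
  have : (Ideal.Quotient.mk (Ideal.span {a})) (u * a + b ^ n * v) =
      b ^ n • Ideal.Quotient.mk (Ideal.span {a}) v := by
    rw [map_add, Ideal.Quotient.eq_zero_iff_mem.2
      (Ideal.mul_mem_left _ _ (Ideal.mem_span_singleton_self a)), zero_add]
    rfl
  rw [this]
  refine Submodule.smul_mem_smul (Ideal.pow_mem_pow ?_ n) trivial
  rw [hm]; exact Ideal.subset_span (by simp)

lemma exists_xy {R : Type u} [CommRing R] [IsNoetherianRing R] (P : Ideal R)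
    [hP : P.IsPrime] (hht : Order.height (⟨P, hP⟩ : PrimeSpectrum R) = 2)
    (hreg : ringKrullDim (Localization.AtPrime P) =
        (Module.finrank (IsLocalRing.ResidueField (Localization.AtPrime P))
          (IsLocalRing.CotangentSpace (Localization.AtPrime P)) : ℕ)) :
    ∃ x y : R, x ≠ 0 ∧ x ∈ P ∧ y ∈ P ∧
      (∀ p ∈ P, ∃ s ∈ P.primeCompl, s * p ∈ Ideal.span {x, y}) ∧
      (∀ z, y * z ∈ Ideal.span {x} → ∃ s ∈ P.primeCompl, s * z ∈ Ideal.span {x}) := by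
  have hh : P.height = 2 :=
    (PrimeSpectrum.height_eq_orderHeight ⟨P, hP⟩).trans hht
  have hd : ringKrullDim (Localization.AtPrime P) = 2 := by
    rw [IsLocalization.AtPrime.ringKrullDim_eq_height P, hh]; rfl
  have hn : (maximalIdeal (Localization.AtPrime P)).spanFinrank = 2 := by
    rw [spanFinrank_maximalIdeal_eq_finrank_cotangentSpace]
    rw [hd] at hreg
    exact_mod_cast hreg.symm
  have hfg : (maximalIdeal (Localization.AtPrime P)).FG := IsNoetherian.noetherian _
  have hc := Submodule.FG.generators_ncard hfg
  rw [hn, Set.ncard_eq_two] at hc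
  obtain ⟨α, β, -, hab⟩ := hc
  have hspan := Submodule.span_generators (maximalIdeal (Localization.AtPrime P))
  rw [hab] at hspan
  obtain ⟨⟨x, s⟩, hx⟩ := IsLocalization.surj P.primeCompl α
  obtain ⟨⟨y, t⟩, hy⟩ := IsLocalization.surj P.primeCompl β
  dsimp only at hx hy
  have hm : maximalIdeal (Localization.AtPrime P) =
      Ideal.span {algebraMap R _ x, algebraMap R _ y} := by
    rw [← hspan, ← hx, ← hy]
    change Ideal.span _ = _
    rw [Ideal.span_insert, Ideal.span_insert,
      Ideal.span_singleton_mul_right_unit (IsLocalization.map_units _ s),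
      Ideal.span_singleton_mul_right_unit (IsLocalization.map_units _ t)]
  have mem_iff : ∀ r : R, algebraMap R (Localization.AtPrime P) r ∈
      maximalIdeal (Localization.AtPrime P) ↔ r ∈ P := fun r =>
    IsLocalization.AtPrime.to_map_mem_maximal_iff _ P r
  refine ⟨x, y, ?_, ?_, ?_, ?_, ?_⟩
  · rintro rfl
    refine pow_notMem (algebraMap R _ y) (algebraMap R _ 0) (by rw [hm, Set.pair_comm]) hd 1 ?_
    simp
  · rw [← mem_iff, hm]; exact Ideal.subset_span (by simp)
  · rw [← mem_iff, hm]; exact Ideal.subset_span (by simp)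
  · intro p hp
    rw [← mem_iff, hm, ← Set.image_pair, ← Ideal.map_span,
      IsLocalization.algebraMap_mem_map_algebraMap_iff P.primeCompl] at hp
    exact hp
  · intro z hz
    have h1 : algebraMap R (Localization.AtPrime P) y * algebraMap R _ z ∈
        Ideal.span {algebraMap R (Localization.AtPrime P) x} := by
      rw [← map_mul, ← Set.image_singleton, ← Ideal.map_span]
      exact Ideal.mem_map_of_mem _ hz
    have h2 := reg_local _ _ hm hd _ h1
    rw [← Set.image_singleton, ← Ideal.map_span,
      IsLocalization.algebraMap_mem_map_algebraMap_iff P.primeCompl] at h2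
    exact h2

end regular
end SecondChern

namespace SecondChern

section loc
variable {R : Type u} [CommRing R] (P : Ideal R) [hP : P.IsPrime]
variable {N₁ N₂ N₃ : Type u} [AddCommGroup N₁] [Module R N₁] [AddCommGroup N₂] [Module R N₂]
  [AddCommGroup N₃] [Module R N₃]

/-- Localized module. -/
abbrev LM (N : Type u) [AddCommGroup N] [Module R N] : Type u := LocalizedModule P.primeCompl N

/-- Localized map. -/
noncomputable abbrev lmap (f : N₁ →ₗ[R] N₂) : LM P N₁ →ₗ[Localization.AtPrime P] LM P N₂ :=
  LocalizedModule.map P.primeCompl f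

/-- Length of the localization. -/
noncomputable abbrev LL (N : Type u) [AddCommGroup N] [Module R N] : ℕ∞ :=
  Module.length (Localization.AtPrime P) (LM P N)

lemma lmap_exact {f : N₁ →ₗ[R] N₂} {g : N₂ →ₗ[R] N₃} (h : Function.Exact f g) :
    Function.Exact (lmap P f) (lmap P g) :=
  LocalizedModule.map_exact P.primeCompl f g h

lemma lmap_inj {f : N₁ →ₗ[R] N₂} (h : Function.Injective f) : Function.Injective (lmap P f) :=
  LocalizedModule.map_injective P.primeCompl f h

lemma lmap_surj {f : N₁ →ₗ[R] N₂} (h : Function.Surjective f) : Function.Surjective (lmap P f) :=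
  LocalizedModule.map_surjective P.primeCompl f h

lemma lmap_comp_apply (f : N₁ →ₗ[R] N₂) (g : N₂ →ₗ[R] N₃) (x : LM P N₁) :
    lmap P g (lmap P f x) = lmap P (g ∘ₗ f) x := by
  induction x using LocalizedModule.induction_on with
  | h m s => simp [lmap, LocalizedModule.map_mk]

lemma lmap_smul_id (r : R) (x : LM P N₁) :
    lmap P (r • (LinearMap.id : N₁ →ₗ[R] N₁)) x = algebraMap R (Localization.AtPrime P) r • x := by
  induction x using LocalizedModule.induction_on with
  | h m s =>
    rw [algebraMap_smul]
    simp [lmap, LocalizedModule.smul'_mk]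

/-- Localized equivalence. -/
lemma lmap_bij (e : N₁ ≃ₗ[R] N₂) : Function.Bijective (lmap P e.toLinearMap) :=
  ⟨lmap_inj P e.injective, lmap_surj P e.surjective⟩

lemma LL_eq_of_equiv (e : N₁ ≃ₗ[R] N₂) : LL P N₁ = LL P N₂ :=
  (LinearEquiv.ofBijective _ (lmap_bij P e)).length_eq

lemma LM_subsingleton_of_exact {f : N₁ →ₗ[R] N₂} {g : N₂ →ₗ[R] N₃} (h : Function.Exact f g)
    [h1 : Subsingleton (LM P N₁)] [h3 : Subsingleton (LM P N₃)] : Subsingleton (LM P N₂) := by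
  refine subsingleton_of_forall_eq 0 fun x => ?_
  obtain ⟨y, rfl⟩ := (lmap_exact P h x).1 (Subsingleton.elim _ _)
  rw [Subsingleton.elim y 0, map_zero]

lemma lmap_inj_of_exact {f : N₁ →ₗ[R] N₂} {g : N₂ →ₗ[R] N₃} (h : Function.Exact f g)
    [h1 : Subsingleton (LM P N₁)] : Function.Injective (lmap P g) := by
  rw [injective_iff_map_eq_zero]
  intro x hx
  obtain ⟨y, rfl⟩ := (lmap_exact P h x).1 hx
  rw [Subsingleton.elim y 0, map_zero]

lemma lmap_surj_of_exact {f : N₁ →ₗ[R] N₂} {g : N₂ →ₗ[R] N₃} (h : Function.Exact f g)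
    [h1 : Subsingleton (LM P N₃)] : Function.Surjective (lmap P f) := fun x =>
  (lmap_exact P h x).1 (Subsingleton.elim _ _)

lemma exists_ann [Module.Finite R N₁] [h : Subsingleton (LM P N₁)] :
    ∃ s ∈ P.primeCompl, ∀ x : N₁, s • x = 0 := by
  have h1 : (⟨P, hP⟩ : PrimeSpectrum R) ∉ Module.support R N₁ := by
    rw [Module.notMem_support_iff]; exact h
  rw [Module.mem_support_iff_of_finite, SetLike.not_le_iff_exists] at h1
  obtain ⟨s, hs, hsP⟩ := h1
  exact ⟨s, hsP, fun x => Module.mem_annihilator.1 hs x⟩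

lemma LM_EE_subsingleton_of_ann (s : R) (hs : s ∈ P.primeCompl) (h : ∀ x : N₁, s • x = 0) (n : ℕ) :
    Subsingleton (LM P (EE R N₁ n)) := by
  rw [LocalizedModule.subsingleton_iff]
  exact fun m => ⟨s, hs, smul_eq_zero_of_ann s h n m⟩

lemma LM_EE_subsingleton [Module.Finite R N₁] [h : Subsingleton (LM P N₁)] (n : ℕ) :
    Subsingleton (LM P (EE R N₁ n)) := by
  obtain ⟨s, hs, h⟩ := exists_ann P (N₁ := N₁)
  exact LM_EE_subsingleton_of_ann P s hs h n

lemma lmap_emap_bij [IsNoetherianRing R] [Module.Finite R N₁] {g : N₁ →ₗ[R] N₂}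
    (hg : Function.Surjective g)
    (hk : Subsingleton (LM P (LinearMap.ker g))) (n : ℕ) :
    Function.Bijective (lmap P (emap g (n+1))) := by
  have h0 := LM_EE_subsingleton P (N₁ := LinearMap.ker g)
  have H := LinearMap.exact_subtype_ker_map g
  have hi := (LinearMap.ker g).subtype_injective
  have := h0 n
  have := h0 (n+1)
  exact ⟨lmap_inj_of_exact P (exact₃ _ _ hi hg H n), lmap_surj_of_exact P (exact₂ _ _ hi hg H _)⟩

/-- Good modules. -/
structure Good (N : Type u) [AddCommGroup N] [Module R N] : Prop where
  one : Subsingleton (LM P (EE R N 1))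
  three : Subsingleton (LM P (EE R N 3))
  two : LL P (EE R N 2) = LL P N
  fin : LL P N ≠ ⊤

lemma LL_of_bij {f : N₁ →ₗ[R] N₂} (h : Function.Bijective (lmap P f)) : LL P N₁ = LL P N₂ :=
  (LinearEquiv.ofBijective _ h).length_eq

lemma Good.of_surj [IsNoetherianRing R] [Module.Finite R N₁] {g : N₁ →ₗ[R] N₂}
    (hg : Function.Surjective g)
    (hk : Subsingleton (LM P (LinearMap.ker g))) : Good P N₁ ↔ Good P N₂ := by
  have hb := lmap_emap_bij P hg hk
  have hl : LL P N₁ = LL P N₂ := LL_of_bij P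
    ⟨lmap_inj_of_exact P (LinearMap.exact_subtype_ker_map g), lmap_surj P hg⟩
  have h1 := (Equiv.ofBijective _ (hb 0)).subsingleton_congr
  have h3 := (Equiv.ofBijective _ (hb 2)).subsingleton_congr
  have h2 := LL_of_bij P (hb 1)
  exact ⟨fun h => ⟨h1.2 h.one, h3.2 h.three, by rw [h2, ← hl, h.two], hl ▸ h.fin⟩,
   fun h => ⟨h1.1 h.one, h3.1 h.three, by rw [← h2, hl, h.two], hl.symm ▸ h.fin⟩⟩

lemma Good.of_zero [Module.Finite R N₁] (h : Subsingleton (LM P N₁)) : Good P N₁ := by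
  have h0 := LM_EE_subsingleton P (N₁ := N₁)
  have := h0 2
  exact ⟨h0 1, h0 3, by simp [LL, Module.length_eq_zero], by simp [LL, Module.length_eq_zero]⟩

lemma Good.of_exact (f : N₁ →ₗ[R] N₂) (g : N₂ →ₗ[R] N₃) (hf : Function.Injective f)
    (hg : Function.Surjective g) (H : Function.Exact f g) (h1 : Good P N₁) (h3 : Good P N₃) :
    Good P N₂ := by
  have := h1.one
  have := h1.three
  have := h3.one
  have := h3.three
  have hl : LL P N₂ = LL P N₁ + LL P N₃ :=
    Module.length_eq_add_of_exact _ _ (lmap_inj P hf) (lmap_surj P hg) (lmap_exact P H)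
  have hl2 : LL P (EE R N₂ 2) = LL P (EE R N₃ 2) + LL P (EE R N₁ 2) :=
    Module.length_eq_add_of_exact _ _ (lmap_inj_of_exact P (exact₃ f g hf hg H 1))
      (lmap_surj_of_exact P (exact₁ f g hf hg H 2)) (lmap_exact P (exact₂ f g hf hg H 2))
  refine ⟨LM_subsingleton_of_exact P (exact₂ f g hf hg H 1),
    LM_subsingleton_of_exact P (exact₂ f g hf hg H 3), ?_, ?_⟩
  · rw [hl, hl2, h1.two, h3.two, add_comm]
  · rw [hl]; exact WithTop.add_ne_top.2 ⟨h1.fin, h3.fin⟩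

end loc
end SecondChern

namespace SecondChern

section koszul
variable {R : Type u} [CommRing R] [IsDomain R] (x : R) (hx : x ≠ 0)

/-- `R/(x)`. -/
abbrev Mx : Type u := R ⧸ Ideal.span {x}

include hx in
lemma mulx_inj : Function.Injective (x • (LinearMap.id : R →ₗ[R] R)) := by
  intro a b h
  exact mul_left_cancel₀ hx h

lemma mulx_exact : Function.Exact (x • (LinearMap.id : R →ₗ[R] R))
    (Submodule.mkQ (Ideal.span {x})) := by
  intro a
  rw [← LinearMap.mem_ker, Submodule.ker_mkQ, Ideal.mem_span_singleton]
  constructor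
  · rintro ⟨c, rfl⟩; exact ⟨c, rfl⟩
  · rintro ⟨c, rfl⟩; exact ⟨c, rfl⟩

include hx in
lemma mx_high (n : ℕ) : Subsingleton (EE R (Mx x) (n+2)) := by
  refine subsingleton_of_forall_eq 0 fun a => ?_
  obtain ⟨b, rfl⟩ := (exact₃ _ _ (mulx_inj x hx) (Submodule.mkQ_surjective (Ideal.span {x}))
    (mulx_exact x) (n+1) a).1 (Subsingleton.elim _ _)
  rw [Subsingleton.elim b 0, map_zero]

include hx in
lemma mx_one : Nonempty (Mx x ≃ₗ[R] EE R (Mx x) 1) := by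
  have hi := mulx_inj x hx
  have hs := Submodule.mkQ_surjective (Ideal.span {x})
  let e : R ≃ₗ[R] EE R R 0 := (eZero.trans (LinearMap.ringLmapEquivSelf R R R)).symm
  let φ : R →ₗ[R] EE R (Mx x) 1 := delta _ _ hi hs (mulx_exact x) 0 ∘ₗ e.toLinearMap
  have hφ : Function.Surjective φ := by
    intro a
    obtain ⟨b, hb⟩ := (exact₃ _ _ hi hs (mulx_exact x) 0 a).1 (Subsingleton.elim _ _)
    exact ⟨e.symm b, by simp [φ, hb]⟩
  have hk : Ideal.span {x} = LinearMap.ker φ := by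
    ext r
    rw [LinearMap.mem_ker, Ideal.mem_span_singleton]
    refine Iff.trans ?_ (exact₁ _ _ hi hs (mulx_exact x) 0 (e r)).symm
    constructor
    · rintro ⟨c, rfl⟩
      refine ⟨e c, ?_⟩
      rw [emap_smul_id, ← map_smul]; rfl
    · rintro ⟨c, hc⟩
      obtain ⟨c, rfl⟩ := e.surjective c
      rw [emap_smul_id, ← map_smul] at hc
      exact ⟨c, (e.injective hc).symm⟩
  exact ⟨Submodule.quotEquivOfEq _ _ hk ≪≫ₗ φ.quotKerEquivOfSurjective hφ⟩

include hx in
lemma ezero_torsion {N : Type u} [AddCommGroup N] [Module R N] (h : ∀ a : N, x • a = 0) :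
    Subsingleton (EE R N 0) := by
  refine (eZero (N₁ := N)).toEquiv.subsingleton_congr.2 (subsingleton_of_forall_eq 0 fun f => ?_)
  ext a
  have : x * f a = 0 := by rw [← smul_eq_mul, ← map_smul, h, map_zero]
  exact (mul_eq_zero.1 this).resolve_left hx

lemma length_eq_of_ker {A Y Z Z' : Type*} [CommRing A] [AddCommGroup Y] [Module A Y]
    [AddCommGroup Z] [Module A Z] [AddCommGroup Z'] [Module A Z'] (g : Y →ₗ[A] Z) (h : Y →ₗ[A] Z')
    (hg : Function.Surjective g) (hh : Function.Surjective h)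
    (hk : LinearMap.ker g = LinearMap.ker h) : Module.length A Z = Module.length A Z' :=
  ((g.quotKerEquivOfSurjective hg).symm ≪≫ₗ Submodule.quotEquivOfEq _ _ hk ≪≫ₗ
    h.quotKerEquivOfSurjective hh).length_eq

variable [IsNoetherianRing R] (P : Ideal R) [hP : P.IsPrime]

include hx in
lemma good_C (y : R)
    (hreg : ∀ z, y * z ∈ Ideal.span {x} → ∃ s ∈ P.primeCompl, s * z ∈ Ideal.span {x})
    (hfin : LL P (Mx x ⧸ LinearMap.range (y • (LinearMap.id : Mx x →ₗ[R] Mx x))) ≠ ⊤) :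
    Good P (Mx x ⧸ LinearMap.range (y • (LinearMap.id : Mx x →ₗ[R] Mx x))) := by
  set Y : Mx x →ₗ[R] Mx x := y • (LinearMap.id : Mx x →ₗ[R] Mx x) with hY
  let p := Y.rangeRestrict
  let i := (LinearMap.range Y).subtype
  let q := (LinearMap.range Y).mkQ
  have hp : Function.Surjective p := Y.surjective_rangeRestrict
  have hi : Function.Injective i := Submodule.subtype_injective _
  have hq : Function.Surjective q := Submodule.mkQ_surjective _
  have H : Function.Exact i q := by
    intro a
    simp [i, q]
  have hip : i ∘ₗ p = Y := rfl
  have hkY : Subsingleton (LM P (LinearMap.ker Y)) := by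
    rw [LocalizedModule.subsingleton_iff]
    rintro ⟨m, hm⟩
    obtain ⟨z, rfl⟩ := Submodule.mkQ_surjective _ m
    have hm' : Submodule.Quotient.mk (p := Ideal.span {x}) (y * z) = 0 := hm
    rw [Submodule.Quotient.mk_eq_zero] at hm'
    obtain ⟨s, hs, hz⟩ := hreg z hm'
    refine ⟨s, hs, Subtype.ext ?_⟩
    exact (Submodule.Quotient.mk_eq_zero (Ideal.span {x})).2 hz
  have hkp : Subsingleton (LM P (LinearMap.ker p)) := by
    rw [LinearMap.ker_rangeRestrict]; exact hkY
  have hb := lmap_emap_bij P hp hkp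
  have hYinj : Function.Injective (lmap P Y) :=
    lmap_inj_of_exact P (LinearMap.exact_subtype_ker_map Y)
  have hM : ∀ n, Subsingleton (LM P (EE R (Mx x) (n+2))) := fun n => by
    have := mx_high x hx n
    infer_instance
  obtain ⟨e⟩ := mx_one x hx
  let E := LinearEquiv.ofBijective _ (lmap_bij P e)
  have hpi : ∀ v, lmap P (emap p 1) (lmap P (emap i 1) v) =
      algebraMap R (Localization.AtPrime P) y • v := by
    intro v
    rw [lmap_comp_apply, ← emap_comp, hip, ← lmap_smul_id]
    congr 2
    ext a
    exact emap_smul_id y 1 a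
  have hi1 : Function.Injective (lmap P (emap i 1)) := by
    rw [injective_iff_map_eq_zero]
    intro v hv
    obtain ⟨w, rfl⟩ := E.surjective v
    have := hpi (E w)
    rw [hv, map_zero, ← map_smul] at this
    have h2 : algebraMap R (Localization.AtPrime P) y • w = 0 :=
      E.injective (by rw [← this, map_zero])
    rw [← lmap_smul_id] at h2
    have h3 : w = 0 := hYinj (by rw [map_zero]; exact h2)
    rw [h3, map_zero]
  have hI0 : Subsingleton (EE R (LinearMap.range Y) 0) := by
    refine ezero_torsion x hx ?_
    rintro ⟨m, hm⟩
    obtain ⟨z, rfl⟩ := Submodule.mkQ_surjective _ m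
    refine Subtype.ext ?_
    exact (Submodule.Quotient.mk_eq_zero (Ideal.span {x})).2
      (Ideal.mul_mem_right _ _ (Ideal.mem_span_singleton_self x))
  refine ⟨?_, ?_, ?_, hfin⟩
  · refine subsingleton_of_forall_eq 0 fun a => ?_
    have h0 : Subsingleton (LM P (EE R (LinearMap.range Y) 0)) := inferInstance
    have hqi := lmap_inj_of_exact P (exact₃ i q hi hq H 0)
    have : lmap P (emap i 1) (lmap P (emap q 1) a) = 0 :=
      (lmap_exact P (exact₂ i q hi hq H 1)).apply_apply_eq_zero a
    apply hqi
    apply hi1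
    rw [map_zero, map_zero]
    exact this
  · have h2 : Subsingleton (LM P (EE R (LinearMap.range Y) 2)) :=
      (Equiv.ofBijective _ (hb 1)).subsingleton_congr.2 (hM 0)
    have := hM 1
    exact LM_subsingleton_of_exact P (exact₃ i q hi hq H 2)
  · have := hM 0
    refine length_eq_of_ker (lmap P (delta i q hi hq H 1))
      (lmap P q ∘ₗ E.symm.toLinearMap ∘ₗ lmap P (emap p 1))
      (lmap_surj_of_exact P (exact₃ i q hi hq H 1)) ?_ ?_
    · exact (lmap_surj P hq).comp (E.symm.surjective.comp (hb 0).2)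
    · have hYq : Function.Exact Y q := by
        intro a
        simp [q]
      ext w
      rw [LinearMap.mem_ker, LinearMap.mem_ker]
      refine (lmap_exact P (exact₁ i q hi hq H 1) w).trans
        (Iff.trans ?_ (lmap_exact P hYq (E.symm (lmap P (emap p 1) w))).symm)
      constructor
      · rintro ⟨v, rfl⟩
        refine ⟨E.symm v, ?_⟩
        rw [hpi, hY, lmap_smul_id, map_smul]
      · rintro ⟨m, hm⟩
        refine ⟨E m, (hb 0).1 ?_⟩
        refine (hpi _).trans ?_
        have hm2 := (lmap_smul_id P y m).symm.trans hm
        rw [LinearEquiv.eq_symm_apply, map_smul] at hm2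
        exact hm2

end koszul
end SecondChern

namespace SecondChern
section main
variable {R : Type u} [CommRing R]

lemma simple_RP (P : Ideal R) [hP : P.IsPrime] :
    IsSimpleModule (Localization.AtPrime P) (LM P (R ⧸ P)) := by
  rw [isSimpleModule_iff_toSpanSingleton_surjective]
  constructor
  · rw [← not_subsingleton_iff_nontrivial, LocalizedModule.subsingleton_iff]
    intro h
    obtain ⟨r, hr, h⟩ := h (Submodule.Quotient.mk 1)
    rw [← Submodule.Quotient.mk_smul, Submodule.Quotient.mk_eq_zero, smul_eq_mul, mul_one] at h
    exact hr h
  · intro m hm n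
    induction m using LocalizedModule.induction_on with
    | h z s =>
    induction n using LocalizedModule.induction_on with
    | h w t =>
    obtain ⟨z, rfl⟩ := Submodule.mkQ_surjective _ z
    obtain ⟨w, rfl⟩ := Submodule.mkQ_surjective _ w
    have hz : z ∈ P.primeCompl := by
      intro hz
      apply hm
      rw [show P.mkQ z = 0 from (Submodule.Quotient.mk_eq_zero P).2 hz, LocalizedModule.zero_mk]
    refine ⟨Localization.mk (w * s) (t * ⟨z, hz⟩), ?_⟩
    rw [LinearMap.toSpanSingleton_apply, LocalizedModule.mk_smul_mk, LocalizedModule.mk_eq]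
    refine ⟨1, ?_⟩
    simp only [one_smul, Submonoid.smul_def, Submonoid.coe_mul, ← map_smul, smul_eq_mul]
    congr 1
    ring

variable [IsDomain R] [IsNoetherianRing R]

lemma good_RP (P : Ideal R) [hP : P.IsPrime]
    (hht : Order.height (⟨P, hP⟩ : PrimeSpectrum R) = 2)
    (hreg : ringKrullDim (Localization.AtPrime P) =
        (Module.finrank (IsLocalRing.ResidueField (Localization.AtPrime P))
          (IsLocalRing.CotangentSpace (Localization.AtPrime P)) : ℕ)) :
    Good P (R ⧸ P) := by
  obtain ⟨x, y, hx, hxP, hyP, hgen, hxy⟩ := exists_xy P hht hreg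
  have hxle : Ideal.span {x} ≤ P := (Ideal.span_singleton_le_iff_mem _).2 hxP
  let Y : Mx x →ₗ[R] Mx x := y • (LinearMap.id : Mx x →ₗ[R] Mx x)
  let c0 : Mx x →ₗ[R] R ⧸ P := Submodule.factor hxle
  have hr : LinearMap.range Y ≤ LinearMap.ker c0 := by
    rintro _ ⟨m, rfl⟩
    obtain ⟨z, rfl⟩ := Submodule.mkQ_surjective _ m
    exact (Submodule.Quotient.mk_eq_zero P).2 (Ideal.mul_mem_right z P hyP)
  let c : (Mx x ⧸ LinearMap.range Y) →ₗ[R] R ⧸ P := (LinearMap.range Y).liftQ c0 hr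
  have hc : Function.Surjective c := by
    intro a
    obtain ⟨z, rfl⟩ := Submodule.mkQ_surjective _ a
    exact ⟨(LinearMap.range Y).mkQ ((Ideal.span {x}).mkQ z), rfl⟩
  have hk : Subsingleton (LM P (LinearMap.ker c)) := by
    rw [LocalizedModule.subsingleton_iff]
    rintro ⟨m, hm⟩
    obtain ⟨m, rfl⟩ := Submodule.mkQ_surjective _ m
    obtain ⟨z, rfl⟩ := Submodule.mkQ_surjective _ m
    have hz : z ∈ P := (Submodule.Quotient.mk_eq_zero P).1 hm
    obtain ⟨s, hs, h⟩ := hgen z hz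
    refine ⟨s, hs, Subtype.ext ?_⟩
    refine (Submodule.Quotient.mk_eq_zero (LinearMap.range Y)
      (x := (Ideal.span {x}).mkQ (s * z))).2 ?_
    rw [Ideal.mem_span_pair] at h
    obtain ⟨a, b, h⟩ := h
    refine ⟨(Ideal.span {x}).mkQ b, ?_⟩
    refine (Submodule.Quotient.eq (Ideal.span {x}) (x := y * b)).2 ?_
    rw [← h, Ideal.mem_span_singleton]
    exact ⟨-a, by ring⟩
  have hfin : LL P (R ⧸ P) ≠ ⊤ := by
    have := simple_RP P
    rw [LL, Module.length_eq_one]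
    simp
  rw [← Good.of_surj P hc hk]
  refine good_C x hx P y hxy ?_
  have hl : LL P (Mx x ⧸ LinearMap.range Y) = LL P (R ⧸ P) := LL_of_bij P
    ⟨lmap_inj_of_exact P (LinearMap.exact_subtype_ker_map c), lmap_surj P hc⟩
  exact hl.trans_ne hfin

lemma good_main (P : Ideal R) [hP : P.IsPrime]
    (hht : Order.height (⟨P, hP⟩ : PrimeSpectrum R) = 2)
    (hreg : ringKrullDim (Localization.AtPrime P) =
        (Module.finrank (IsLocalRing.ResidueField (Localization.AtPrime P))
          (IsLocalRing.CotangentSpace (Localization.AtPrime P)) : ℕ))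
    (M : Type u) [AddCommGroup M] [Module R M] [hf : Module.Finite R M] :
    IsPseudoNull R M → Good P M := by
  induction hf using IsNoetherianRing.induction_on_isQuotientEquivQuotientPrime R with
  | subsingleton N =>
    intro _
    exact Good.of_zero P inferInstance
  | quotient N Q e =>
    intro hN
    have hQ : ¬ Order.height Q ≤ 1 := by
      intro h
      have h1 := hN Q.1 h
      rw [LocalizedModule.subsingleton_iff] at h1
      obtain ⟨r, hr, h⟩ := h1 (e.symm (Submodule.Quotient.mk 1))
      rw [← map_smul, LinearEquiv.map_eq_zero_iff, ← Submodule.Quotient.mk_smul,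
        Submodule.Quotient.mk_eq_zero, smul_eq_mul, mul_one] at h
      exact hr h
    by_cases hQP : Q.1 ≤ P
    · have hQe : Q = ⟨P, hP⟩ := by
        by_contra hne
        have hlt : Q < ⟨P, hP⟩ := lt_of_le_of_ne hQP hne
        have h2 := Order.height_add_one_le hlt
        rw [hht] at h2
        apply hQ
        rw [show (2 : ℕ∞) = 1 + 1 from rfl] at h2
        exact (ENat.add_le_add_iff_right (by simp)).1 h2
      subst hQe
      have hk : Subsingleton (LM P (LinearMap.ker e.toLinearMap)) := by
        rw [LinearEquiv.ker]; infer_instance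
      exact (Good.of_surj P (g := e.toLinearMap) e.surjective hk).2 (good_RP P hht hreg)
    · rw [SetLike.not_le_iff_exists] at hQP
      obtain ⟨s, hsQ, hsP⟩ := hQP
      refine Good.of_zero P (LocalizedModule.subsingleton_iff.2 fun m => ⟨s, hsP, ?_⟩)
      apply e.injective
      rw [map_smul, map_zero]
      obtain ⟨z, hz⟩ := Submodule.mkQ_surjective _ (e m)
      rw [← hz]
      exact (Submodule.Quotient.mk_eq_zero Q.1).2 (Ideal.mul_mem_right z _ hsQ)
  | exact N₁ N₂ N₃ f g hf hg H h1 h3 =>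
    intro h2
    refine Good.of_exact P f g hf hg H (h1 ?_) (h3 ?_)
    · intro q hq hle
      have := h2 q hle
      exact (lmap_inj q hf).subsingleton
    · intro q hq hle
      have := h2 q hle
      exact (lmap_surj q hg).subsingleton

end main
end SecondChern
/-- `R` is a commutative Noetherian regular integral domain (regularity expressed
by saying that each localization at a prime is a regular local ring, i.e. its Krull dimension
equals the dimension of its cotangent space), and `M` is a finitely generated pseudo-null
`R`-module.  Then at every height-2 prime `P`, the localizations of `M` and of `Ext²_R(M,R)`
have finite, equal lengths. -/
theorem statement9 (R : Type u) [CommRing R] [IsDomain R] [IsNoetherianRing R]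
    (hreg : ∀ (P : Ideal R) [P.IsPrime],
      ringKrullDim (Localization.AtPrime P) =
        (Module.finrank (IsLocalRing.ResidueField (Localization.AtPrime P))
          (IsLocalRing.CotangentSpace (Localization.AtPrime P)) : ℕ))
    (M : Type u) [AddCommGroup M] [Module R M] [Module.Finite R M]
    (hM : IsPseudoNull R M) :
    ∀ (P : Ideal R) [hP : P.IsPrime], Order.height (⟨P, hP⟩ : PrimeSpectrum R) = 2 →
      locFiniteLength R M P ∧
      locFiniteLength R (ExtMod R M R 2) P ∧
      locLength R (ExtMod R M R 2) P = locLength R M P := by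
  intro P hP hht
  have h := SecondChern.good_main P hht (hreg P) M hM
  have h2 : SecondChern.LL P (ExtMod R M R 2) = SecondChern.LL P M :=
    (SecondChern.LL_eq_of_equiv P (SecondChern.extModEquiv M)).trans h.two
  refine ⟨Module.length_ne_top_iff.1 h.fin, Module.length_ne_top_iff.1 (h2.trans_ne h.fin), ?_⟩
  rw [locLength, locLength, ← Module.length_eq_height, ← Module.length_eq_height]
  exact h2
end
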